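/- If T is a strictly nonnegative tensor of order m ≥ 2 and dimension n ≥ 2, then its spectral radius ρ(T) is positive. -/

import Mathlib

open Finset

/-- `(T x^{m-1})_i` for an order-`(k+1)` tensor encoded by its first index
and the `k` trailing indices (so for an order-`m` tensor, `k = m - 1`). -/
def tapp {ι : Type*} [Fintype ι] {k : ℕ} (T : ι → (Fin k → ι) → ℝ) (x : ι → ℝ) (i : ι) : ℝ :=
  ∑ β : Fin k → ι, T i β * ∏ l, x (β l)

/-- All entries of the tensor are nonnegative. -/
def TNonneg {ι : Type*} {k : ℕ} (T : ι → (Fin k → ι) → ℝ) : Prop :=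
  ∀ i β, 0 ≤ T i β

/-- `T` is strictly nonnegative: nonnegative, and `T x^{m-1} > 0` whenever `x > 0`. -/
def TStrictlyNonneg {ι : Type*} [Fintype ι] {k : ℕ} (T : ι → (Fin k → ι) → ℝ) : Prop :=
  TNonneg T ∧ ∀ x : ι → ℝ, (∀ i, 0 < x i) → ∀ i, 0 < tapp T x i

/-- Representation matrix `G(T)`: `G(T)_{ij}` is the sum of all `T_{i i₂…i_m}` with
`j ∈ {i₂,…,i_m}`. -/
def repMat {ι : Type*} [Fintype ι] [DecidableEq ι] {k : ℕ}
    (T : ι → (Fin k → ι) → ℝ) : Matrix ι ι ℝ :=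
  fun i j => ∑ β : Fin k → ι, if ∃ l, β l = j then T i β else 0

/-- Majorization matrix `M(T)`: `M(T)_{ij} = T_{i j j … j}`. -/
def majMat {ι : Type*} {k : ℕ} (T : ι → (Fin k → ι) → ℝ) : Matrix ι ι ℝ :=
  fun i j => T i (fun _ => j)

/-- A square matrix is reducible if some nonempty proper index subset `I` satisfies
`A i j = 0` for all `i ∈ I`, `j ∉ I`. -/
def MatReducible {ι : Type*} [Fintype ι] (A : Matrix ι ι ℝ) : Prop :=
  ∃ I : Finset ι, I.Nonempty ∧ I ≠ Finset.univ ∧ ∀ i ∈ I, ∀ j ∉ I, A i j = 0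

def MatIrreducible {ι : Type*} [Fintype ι] (A : Matrix ι ι ℝ) : Prop :=
  ¬ MatReducible A

/-- A square nonnegative matrix is primitive if some positive power is entrywise positive. -/
def MatPrimitive {ι : Type*} [Fintype ι] [DecidableEq ι] (A : Matrix ι ι ℝ) : Prop :=
  ∃ p : ℕ, 0 < p ∧ ∀ i j, 0 < (A ^ p) i j

/-- `lam ∈ ℂ` is an eigenvalue of `T`:
`(T x^{m-1})_i = lam * x_i^{m-1}` for some nonzero `x ∈ ℂⁿ`. -/
def TIsEig {ι : Type*} [Fintype ι] {k : ℕ} (T : ι → (Fin k → ι) → ℝ) (lam : ℂ) : Prop :=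
  ∃ x : ι → ℂ, x ≠ 0 ∧
    ∀ i, (∑ β : Fin k → ι, (T i β : ℂ) * ∏ l, x (β l)) = lam * x i ^ k

/-- Spectral radius: the supremum of moduli of eigenvalues. -/
noncomputable def specRad {ι : Type*} [Fintype ι] {k : ℕ}
    (T : ι → (Fin k → ι) → ℝ) : ℝ :=
  sSup {r : ℝ | ∃ lam : ℂ, TIsEig T lam ∧ r = ‖lam‖}

/-- Induced tensor `T_I` on a subset `I` of the index set. -/
def inducedT {ι : Type*} {k : ℕ} (T : ι → (Fin k → ι) → ℝ) (I : Finset ι) :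
    {i // i ∈ I} → (Fin k → {i // i ∈ I}) → ℝ :=
  fun i β => T i.val (fun l => (β l).val)

/-- The identity tensor: `E_{i₁…i_m} = 1` if all indices coincide, `0` otherwise. -/
def idT (ι : Type*) [DecidableEq ι] (k : ℕ) : ι → (Fin k → ι) → ℝ :=
  fun i β => if ∀ l, β l = i then 1 else 0

/-- A tensor is reducible if some nonempty proper index subset `I` satisfies
`T_{i₁ i₂ … i_m} = 0` for all `i₁ ∈ I` and `i₂, …, i_m ∉ I`. -/
def TReducible {ι : Type*} [Fintype ι] {k : ℕ} (T : ι → (Fin k → ι) → ℝ) : Prop :=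
  ∃ I : Finset ι, I.Nonempty ∧ I ≠ Finset.univ ∧
    ∀ i ∈ I, ∀ β : Fin k → ι, (∀ l, β l ∉ I) → T i β = 0

/-- The map `F_T(x)_i = ((T x^{m-1})_i)^{1/(m-1)}` (here `k = m - 1`). -/
noncomputable def FT {ι : Type*} [Fintype ι] {k : ℕ}
    (T : ι → (Fin k → ι) → ℝ) (x : ι → ℝ) : ι → ℝ :=
  fun i => (tapp T x i) ^ ((k : ℝ)⁻¹)

/-- A tensor is primitive if some iterate of `F_T` is entrywise positive on every
nonzero nonnegative vector. -/
def TPrimitive {ι : Type*} [Fintype ι] {k : ℕ} (T : ι → (Fin k → ι) → ℝ) : Prop :=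
  ∃ p : ℕ, 0 < p ∧ ∀ x : ι → ℝ, (∀ i, 0 ≤ x i) → x ≠ 0 → ∀ i, 0 < (FT T)^[p] x i

/-- `T` is weakly positive: all off-diagonal entries of `M(T)` are positive. -/
def TWeaklyPositive {ι : Type*} {k : ℕ} (T : ι → (Fin k → ι) → ℝ) : Prop :=
  ∀ i j, i ≠ j → 0 < T i (fun _ => j)

/-- `T` is essentially positive: `T x^{m-1} > 0` for every nonzero `x ≥ 0`. -/
def TEssentiallyPositive {ι : Type*} [Fintype ι] {k : ℕ} (T : ι → (Fin k → ι) → ℝ) : Prop :=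
  ∀ x : ι → ℝ, (∀ i, 0 ≤ x i) → x ≠ 0 → ∀ i, 0 < tapp T x i

/-- Hilbert's projective metric between two positive vectors:
`d(u,v) = log (max_i v_i/u_i) - log (min_i v_i/u_i)`. -/
noncomputable def hilbertD {n : ℕ} (hn : 0 < n) (u v : Fin n → ℝ) : ℝ :=
  Real.log ((Finset.univ : Finset (Fin n)).sup' ⟨⟨0, hn⟩, Finset.mem_univ _⟩
      (fun i => v i / u i)) -
  Real.log ((Finset.univ : Finset (Fin n)).inf' ⟨⟨0, hn⟩, Finset.mem_univ _⟩
      (fun i => v i / u i))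

/-!
After taking `k`-th roots, `F_T` is monotone and homogeneous of degree one on the positive cone. In
logarithmic coordinates such a map is monotone and commutes with adding constants, hence is
nonexpansive for the sup norm. So `a • g` is a contraction for every `a < 1`, where `g` is `F_T` in
logarithmic coordinates. Its fixed point may escape to infinity as `a → 1`, but at a rate at most
`‖g 0‖ / (1 - a)`; normalised to the unit sphere it solves `(F_T x)ᵢ ^ a = μ xᵢ` with `μ` trapped
in `[exp (-‖g 0‖), exp ‖g 0‖]`. A limit point as `a → 1` is an eigenvector of `F_T`, and thus of
`T`, whose eigenvalue is positive.
-/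

section Nonexpansive

theorem lipschitzWith_one_of_monotone_of_add_const {ι κ : Type*} [Fintype ι] [Fintype κ]
    {g : (ι → ℝ) → κ → ℝ} (hmono : Monotone g)
    (hadd : ∀ u c, g (u + Function.const ι c) = g u + Function.const κ c) :
    LipschitzWith 1 g := by
  have sub_le (u v : ι → ℝ) (i : κ) : g u i - g v i ≤ ‖u - v‖ := by
    have huv : u ≤ v + Function.const ι ‖u - v‖ := fun j =>
      sub_le_iff_le_add'.1 ((le_abs_self _).trans (norm_le_pi_norm (u - v) j))
    have hg := hmono huv i
    rw [hadd] at hg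
    exact sub_le_iff_le_add'.2 hg
  refine LipschitzWith.of_dist_le_mul fun u v => ?_
  rw [NNReal.coe_one, one_mul, dist_eq_norm, dist_eq_norm]
  refine (pi_norm_le_iff_of_nonneg (norm_nonneg _)).2 fun i => abs_sub_le_iff.2 ⟨sub_le u v i, ?_⟩
  exact norm_sub_rev u v ▸ sub_le v u i

theorem exists_smul_apply_eq_of_lipschitzWith_one {E : Type*} [NormedAddCommGroup E]
    [NormedSpace ℝ E] [CompleteSpace E] {g : E → E} (hg : LipschitzWith 1 g) {a : ℝ}
    (ha0 : 0 ≤ a) (ha1 : a < 1) : ∃ u, a • g u = u := by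
  have hcontr : ContractingWith ⟨a, ha0⟩ fun u => a • g u := by
    refine ⟨ha1, LipschitzWith.of_dist_le_mul fun u v => ?_⟩
    rw [dist_smul₀, Real.norm_of_nonneg ha0]
    refine mul_le_mul_of_nonneg_left ?_ ha0
    simpa using hg.dist_le_mul u v
  exact ⟨hcontr.fixedPoint, hcontr.fixedPoint_isFixedPt⟩

theorem one_sub_mul_norm_le_of_smul_apply_eq {E : Type*} [SeminormedAddCommGroup E]
    [NormedSpace ℝ E] {g : E → E} (hg : LipschitzWith 1 g) {a : ℝ} (ha0 : 0 ≤ a) (ha1 : a ≤ 1)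
    {u : E} (hu : a • g u = u) : (1 - a) * ‖u‖ ≤ ‖g 0‖ := by
  have hgu : ‖g u‖ ≤ ‖u‖ + ‖g 0‖ := by
    have h := hg.dist_le_mul u 0
    rw [NNReal.coe_one, one_mul, dist_zero_right, dist_eq_norm] at h
    linarith [norm_le_norm_sub_add (g u) (g 0)]
  have hnorm : ‖u‖ ≤ a * ‖u‖ + ‖g 0‖ := calc
    ‖u‖ = a * ‖g u‖ := by rw [← Real.norm_of_nonneg ha0, ← norm_smul, hu]
    _ ≤ a * (‖u‖ + ‖g 0‖) := mul_le_mul_of_nonneg_left hgu ha0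
    _ ≤ a * ‖u‖ + ‖g 0‖ := by
      rw [mul_add]
      gcongr
      exact mul_le_of_le_one_left (norm_nonneg _) ha1
  linarith

end Nonexpansive

section PerronFrobenius

theorem norm_exp_sub_eq_one {ι : Type*} [Fintype ι] {u : ι → ℝ} {i₀ : ι} (hmax : ∀ j, u j ≤ u i₀) :
    ‖fun j => Real.exp (u j - u i₀)‖ = 1 := by
  apply le_antisymm
  · refine (pi_norm_le_iff_of_nonneg zero_le_one).2 fun j => ?_
    rw [Real.norm_of_nonneg (Real.exp_pos _).le, Real.exp_le_one_iff]
    exact sub_nonpos.2 (hmax j)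
  · simpa using norm_le_pi_norm (fun j => Real.exp (u j - u i₀)) i₀

/-- `f` restricts to an order-preserving, positively homogeneous (of degree one) map of the open
positive cone into itself: the maps of nonlinear Perron–Frobenius theory. Nothing is required of
`f` outside the open cone. -/
structure IsMonotoneHomogeneous {ι : Type*} (f : (ι → ℝ) → ι → ℝ) : Prop where
  pos : ∀ ⦃x⦄, (∀ i, 0 < x i) → ∀ i, 0 < f x i
  monotone : ∀ ⦃x y⦄, (∀ i, 0 < x i) → x ≤ y → f x ≤ f y
  map_smul : ∀ ⦃c : ℝ⦄, 0 < c → ∀ ⦃x⦄, (∀ i, 0 < x i) → f (c • x) = c • f x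

/-- The self-map `f` of the positive cone in logarithmic coordinates: `log ∘ f ∘ exp`, with `exp`
and `log` taken entrywise. -/
noncomputable def logConj {ι : Type*} (f : (ι → ℝ) → ι → ℝ) (u : ι → ℝ) : ι → ℝ :=
  fun i => Real.log (f (fun j => Real.exp (u j)) i)

namespace IsMonotoneHomogeneous

variable {ι : Type*} {f : (ι → ℝ) → ι → ℝ}

theorem exp_logConj (hf : IsMonotoneHomogeneous f) (u : ι → ℝ) (i : ι) :
    Real.exp (logConj f u i) = f (fun j => Real.exp (u j)) i :=
  Real.exp_log (hf.pos (fun _ => Real.exp_pos _) i)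

theorem monotone_logConj (hf : IsMonotoneHomogeneous f) : Monotone (logConj f) := fun _ _ huv i =>
  Real.log_le_log (hf.pos (fun _ => Real.exp_pos _) i)
    (hf.monotone (fun _ => Real.exp_pos _) (fun j => Real.exp_le_exp.2 (huv j)) i)

theorem map_exp_add_const (hf : IsMonotoneHomogeneous f) (u : ι → ℝ) (c : ℝ) (i : ι) :
    f (fun j => Real.exp (u j + c)) i = Real.exp (logConj f u i + c) := by
  have hexp : (fun j => Real.exp (u j + c)) = Real.exp c • fun j => Real.exp (u j) := by
    ext j
    rw [Real.exp_add, mul_comm, Pi.smul_apply, smul_eq_mul]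
  rw [hexp, hf.map_smul (Real.exp_pos c) fun _ => Real.exp_pos _, Pi.smul_apply, smul_eq_mul,
    ← hf.exp_logConj, ← Real.exp_add, add_comm]

theorem logConj_add_const (hf : IsMonotoneHomogeneous f) (u : ι → ℝ) (c : ℝ) :
    logConj f (u + Function.const ι c) = logConj f u + Function.const ι c := by
  ext i
  change Real.log (f (fun j => Real.exp (u j + c)) i) = logConj f u i + c
  rw [hf.map_exp_add_const, Real.log_exp]

theorem lipschitzWith_logConj [Fintype ι] (hf : IsMonotoneHomogeneous f) :
    LipschitzWith 1 (logConj f) :=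
  lipschitzWith_one_of_monotone_of_add_const hf.monotone_logConj hf.logConj_add_const

theorem exists_rpow_eigenvector [Fintype ι] [Nonempty ι] (hf : IsMonotoneHomogeneous f) {a : ℝ}
    (ha0 : 0 ≤ a) (ha1 : a < 1) :
    ∃ μ ∈ Set.Icc (Real.exp (-‖logConj f 0‖)) (Real.exp ‖logConj f 0‖),
      ∃ x : ι → ℝ, (∀ i, 0 < x i) ∧ ‖x‖ = 1 ∧ ∀ i, f x i ^ a = μ * x i := by
  obtain ⟨u, hu⟩ := exists_smul_apply_eq_of_lipschitzWith_one hf.lipschitzWith_logConj ha0 ha1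
  obtain ⟨i₀, hmax⟩ := Finite.exists_max u
  have hbound : |(1 - a) * u i₀| ≤ ‖logConj f 0‖ := calc
    |(1 - a) * u i₀| = (1 - a) * ‖u i₀‖ := by
      rw [abs_mul, abs_of_pos (sub_pos.2 ha1), Real.norm_eq_abs]
    _ ≤ (1 - a) * ‖u‖ := mul_le_mul_of_nonneg_left (norm_le_pi_norm u i₀) (sub_pos.2 ha1).le
    _ ≤ ‖logConj f 0‖ :=
      one_sub_mul_norm_le_of_smul_apply_eq hf.lipschitzWith_logConj ha0 ha1.le hu
  refine ⟨Real.exp ((1 - a) * u i₀),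
    ⟨Real.exp_le_exp.2 (abs_le.1 hbound).1, Real.exp_le_exp.2 (abs_le.1 hbound).2⟩,
    fun j => Real.exp (u j - u i₀), fun _ => Real.exp_pos _, norm_exp_sub_eq_one hmax, fun i => ?_⟩
  have hui : a * logConj f u i = u i := congrFun hu i
  simp only [sub_eq_add_neg (u _)]
  rw [hf.map_exp_add_const, ← Real.exp_mul, ← Real.exp_add]
  congr 1
  linear_combination hui

theorem exists_pos_eigenvalue [Finite ι] [Nonempty ι] (hf : IsMonotoneHomogeneous f)
    (hcont : ContinuousOn f (Set.Ici 0)) :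
    ∃ μ : ℝ, 0 < μ ∧ ∃ x : ι → ℝ, 0 ≤ x ∧ x ≠ 0 ∧ f x = μ • x := by
  have := Fintype.ofFinite ι
  obtain ⟨a, -, ha, ha_lim⟩ := exists_seq_strictMono_tendsto' (zero_lt_one' ℝ)
  choose μ hμ x hx_pos hx_norm hx_eq using fun N =>
    hf.exists_rpow_eigenvector (ha N).1.le (ha N).2
  have hx_mem (N : ℕ) : x N ∈ Metric.sphere 0 1 ∩ Set.Ici 0 :=
    ⟨mem_sphere_zero_iff_norm.2 (hx_norm N), fun i => (hx_pos N i).le⟩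
  obtain ⟨⟨μ', x'⟩, ⟨hμ', hx'_norm, hx'_nonneg⟩, φ, hφ, hlim⟩ :=
    (isCompact_Icc.prod ((isCompact_sphere (0 : ι → ℝ) 1).inter_right isClosed_Ici)).tendsto_subseq
      fun N => Set.mk_mem_prod (hμ N) (hx_mem N)
  obtain ⟨hμ_lim, hx_lim⟩ := (Prod.tendsto_iff _ _).1 hlim
  refine ⟨μ', (Real.exp_pos _).trans_le hμ'.1, x', hx'_nonneg,
    ne_zero_of_mem_unit_sphere ⟨x', hx'_norm⟩, funext fun i => ?_⟩
  have hf_lim : Filter.Tendsto (fun N => f (x (φ N)) i) Filter.atTop (nhds (f x' i)) :=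
    tendsto_pi_nhds.1 ((hcont x' hx'_nonneg).tendsto.comp
      (tendsto_nhdsWithin_iff.2 ⟨hx_lim, .of_forall fun N => (hx_mem (φ N)).2⟩)) i
  have hrpow_lim := hf_lim.rpow (ha_lim.comp hφ.tendsto_atTop) (Or.inr one_pos)
  rw [Real.rpow_one] at hrpow_lim
  exact tendsto_nhds_unique hrpow_lim <|
    (hμ_lim.mul (tendsto_pi_nhds.1 hx_lim i)).congr fun N => (hx_eq (φ N) i).symm

end IsMonotoneHomogeneous

end PerronFrobenius

section Tensor

variable {ι : Type*} [Fintype ι] {k : ℕ} {T : ι → (Fin k → ι) → ℝ}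

theorem TNonneg.tapp_nonneg (hT : TNonneg T) {x : ι → ℝ} (hx : 0 ≤ x) (i : ι) : 0 ≤ tapp T x i :=
  sum_nonneg fun β _ => mul_nonneg (hT i β) (prod_nonneg fun l _ => hx (β l))

theorem TNonneg.tapp_mono (hT : TNonneg T) {x y : ι → ℝ} (hx : 0 ≤ x) (hxy : x ≤ y) (i : ι) :
    tapp T x i ≤ tapp T y i :=
  sum_le_sum fun β _ => mul_le_mul_of_nonneg_left
    (prod_le_prod (fun l _ => hx (β l)) fun l _ => hxy (β l)) (hT i β)

theorem tapp_smul (T : ι → (Fin k → ι) → ℝ) (c : ℝ) (x : ι → ℝ) (i : ι) :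
    tapp T (c • x) i = c ^ k * tapp T x i := by
  simp only [tapp, Pi.smul_apply, smul_eq_mul, prod_mul_distrib, prod_const, card_univ,
    Fintype.card_fin, mul_sum, mul_left_comm]

theorem continuous_FT (T : ι → (Fin k → ι) → ℝ) : Continuous (FT T) := by
  refine continuous_pi fun i => Continuous.rpow_const ?_ fun _ => Or.inr (by positivity)
  unfold tapp
  fun_prop

theorem TNonneg.FT_pow (hT : TNonneg T) (hk : k ≠ 0) {x : ι → ℝ} (hx : 0 ≤ x) (i : ι) :
    FT T x i ^ k = tapp T x i :=
  Real.rpow_inv_natCast_pow (hT.tapp_nonneg hx i) hk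

theorem TStrictlyNonneg.isMonotoneHomogeneous_FT (hT : TStrictlyNonneg T) (hk : k ≠ 0) :
    IsMonotoneHomogeneous (FT T) where
  pos x hx i := Real.rpow_pos_of_pos (hT.2 x hx i) _
  monotone x y hx hxy i :=
    have hx0 : 0 ≤ x := fun j => (hx j).le
    Real.rpow_le_rpow (hT.1.tapp_nonneg hx0 i) (hT.1.tapp_mono hx0 hxy i) (by positivity)
  map_smul c hc x hx := by
    ext i
    rw [FT, tapp_smul, Real.mul_rpow (by positivity) (hT.2 x hx i).le,
      Real.pow_rpow_inv_natCast hc.le hk, Pi.smul_apply, smul_eq_mul, FT]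

theorem TStrictlyNonneg.exists_pos_eigenvalue [Nonempty ι] (hT : TStrictlyNonneg T) (hk : k ≠ 0) :
    ∃ μ : ℝ, 0 < μ ∧ ∃ x : ι → ℝ, 0 ≤ x ∧ x ≠ 0 ∧ ∀ i, tapp T x i = μ * x i ^ k := by
  obtain ⟨ν, hν, x, hx0, hx, heig⟩ :=
    (hT.isMonotoneHomogeneous_FT hk).exists_pos_eigenvalue (continuous_FT T).continuousOn
  refine ⟨ν ^ k, pow_pos hν k, x, hx0, hx, fun i => ?_⟩
  rw [← hT.1.FT_pow hk hx0, heig, Pi.smul_apply, smul_eq_mul, mul_pow]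

theorem tIsEig_ofReal {μ : ℝ} {x : ι → ℝ} (hx : x ≠ 0) (heig : ∀ i, tapp T x i = μ * x i ^ k) :
    TIsEig T (μ : ℂ) := by
  refine ⟨fun i => (x i : ℂ), fun h => hx (funext fun i => ?_), fun i => ?_⟩
  · exact Complex.ofReal_eq_zero.1 (congrFun h i)
  · simpa [tapp] using congrArg Complex.ofReal (heig i)

theorem TIsEig.norm_le_sum_abs {lam : ℂ} (h : TIsEig T lam) : ‖lam‖ ≤ ∑ i, ∑ β, |T i β| := by
  obtain ⟨x, hx, heig⟩ := h
  obtain ⟨j, hj⟩ := Function.ne_iff.1 hx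
  have : Nonempty ι := ⟨j⟩
  obtain ⟨i, hmax⟩ := Finite.exists_max fun j => ‖x j‖
  have hxi : 0 < ‖x i‖ := (norm_pos_iff.2 hj).trans_le (hmax j)
  have hrow : ‖lam‖ * ‖x i‖ ^ k ≤ (∑ β, |T i β|) * ‖x i‖ ^ k := calc
    ‖lam‖ * ‖x i‖ ^ k = ‖∑ β : Fin k → ι, (T i β : ℂ) * ∏ l, x (β l)‖ := by
      rw [heig, norm_mul, norm_pow]
    _ ≤ ∑ β : Fin k → ι, |T i β| * ∏ l, ‖x (β l)‖ :=
      norm_sum_le_of_le _ fun β _ => by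
        rw [norm_mul, Complex.norm_real, norm_prod, Real.norm_eq_abs]
    _ ≤ ∑ β : Fin k → ι, |T i β| * ‖x i‖ ^ k := by
      gcongr with β
      simpa using prod_le_prod (s := univ) (fun l _ => norm_nonneg (x (β l))) fun l _ => hmax (β l)
    _ = (∑ β, |T i β|) * ‖x i‖ ^ k := (sum_mul ..).symm
  calc ‖lam‖ ≤ ∑ β, |T i β| := le_of_mul_le_mul_right hrow (pow_pos hxi k)
    _ ≤ ∑ i, ∑ β, |T i β| :=
      single_le_sum (f := fun i => ∑ β, |T i β|) (fun _ _ => sum_nonneg fun _ _ => abs_nonneg _)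
        (mem_univ i)

theorem TIsEig.norm_le_specRad {lam : ℂ} (h : TIsEig T lam) : ‖lam‖ ≤ specRad T := by
  refine le_csSup ⟨∑ i, ∑ β, |T i β|, ?_⟩ ⟨lam, h, rfl⟩
  rintro _ ⟨lam', h', rfl⟩
  exact h'.norm_le_sum_abs

end Tensor

theorem strictly_nonneg_specRad_pos
    (m n : ℕ) (hm : 2 ≤ m) (hn : 2 ≤ n)
    (T : Fin n → (Fin (m - 1) → Fin n) → ℝ)
    (hT : TStrictlyNonneg T) :
    0 < specRad T := by
  have : Nonempty (Fin n) := ⟨⟨0, by omega⟩⟩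
  obtain ⟨μ, hμ, x, -, hx, heig⟩ := hT.exists_pos_eigenvalue (by omega)
  calc 0 < ‖(μ : ℂ)‖ := norm_pos_iff.2 (Complex.ofReal_ne_zero.2 hμ.ne')
    _ ≤ specRad T := (tIsEig_ofReal hx heig).norm_le_specRad
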